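/- Fix x ∈ ℂ, θ ∈ (π/8, π/2] and N ∈ ℕ. Then, as r → ∞ along the positive reals, with y := r e^{iθ} and all fractional powers of y principal-branch powers, P(x,y) · (2^{5/6}/√(π/3)) · y^{1/3} · exp( −3·4^{−4/3}·e^{−2iπ/3}·y^{4/3} + 4^{−2/3}·x·y^{2/3}·e^{−iπ/3} − x²/6 ) − ∑_{n=0}^{N} e^{i(2n+1)π/6} · A_n(x) · y^{−2n/3} = O( r^{−2(N+1)/3} ). -/

import Mathlib

open Real MeasureTheory Filter Asymptotics

/-- The Pearcey-type integral `P(x,y) = ∫₀^∞ exp(−t⁴ − x t²)·cos(y t) dt`. -/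
noncomputable def P (x y : ℂ) : ℂ :=
  ∫ t in Set.Ioi (0 : ℝ), Complex.exp (-(t : ℂ) ^ 4 - x * (t : ℂ) ^ 2) * Complex.cos (y * t)

/-- The coefficients `a_{n,m,k}(x)`. -/
noncomputable def a (x : ℂ) (n m k : ℕ) : ℂ :=
  (-1) ^ m * x ^ k * (2 : ℂ) ^ ((4 * ((2 * m - n - k : ℕ) : ℂ)) / 3) /
    ((k.factorial : ℂ) * ((2 * m - n - k).factorial : ℂ) * ((n - m).factorial : ℂ))

/-- The coefficients `c_n(x)`. -/
noncomputable def c (x : ℂ) (n : ℕ) : ℂ :=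
  ∑ k ∈ Finset.range (n / 2 + 1),
    x ^ (n - 2 * k) *
      ((((3 : ℝ) ^ ((k : ℤ) - (n : ℤ)) * (2 : ℝ) ^ (-(n : ℝ) / 3 - (k : ℝ)) *
          (n.factorial : ℝ) / ((k.factorial : ℝ) * ((n - 2 * k).factorial : ℝ))) : ℝ) : ℂ)

/-- The coefficients `A_n(x)`. -/
noncomputable def A (x : ℂ) (n : ℕ) : ℂ :=
  ∑ m ∈ Finset.Icc ((n + 1) / 2) n, ∑ k ∈ Finset.range (2 * m - n + 1),
    (-1) ^ (n + k) * a x n m k * c x (2 * m + n - k)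

/-!
Put `y = 4 * i * z ^ 3`. Then `2 * P x y` is the integral over `ℝ` of
`exp (-u ^ 4 - x * u ^ 2 - 4 * z ^ 3 * u)`, whose quartic and linear terms have a nondegenerate
saddle point at `u = -z`. For `|arg z| < π / 8`, that is `π / 8 < arg y < 7 * π / 8`, the real line
may be rotated to the line through `0` and `z`. With `u = -z - p / z̄` and `ε = ‖z‖ ^ (-2)` the
exponent becomes a constant plus `q₀ p + ε * q₁ p + ε ^ 2 * q₂ p` with `q₀` quadratic and `p` real.
The Taylor remainder of order `N` of `exp (ε * q₁ p + ε ^ 2 * q₂ p)` in `ε`, multiplied by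
`exp (q₀ p)`, is `ε ^ N` times a function dominated by a Gaussian, uniformly in `arg z`. Integrating
the Taylor polynomial termwise leaves Gaussian moments, which are Hermite polynomials in `x`: these
are the `c_n(x)`, and their combinations are the `A_n(x)`.
-/

/-! ### Two-variable Hermite polynomials -/

section Hermite

variable {K : Type*} [Field K]

/-- The two-variable (Kampé de Fériet) Hermite polynomial of degree `n`, divided by `n!`: the
coefficient of `t ^ n` in the power series of `exp (α * t + β * t ^ 2)`. -/
def hermiteKdF (α β : K) (n : ℕ) : K :=
  ∑ k ∈ Finset.range (n / 2 + 1),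
    α ^ (n - 2 * k) / ((n - 2 * k).factorial : K) * (β ^ k / (k.factorial : K))

@[simp]
lemma hermiteKdF_zero (α β : K) : hermiteKdF α β 0 = 1 := by
  simp [hermiteKdF]

@[simp]
lemma hermiteKdF_one (α β : K) : hermiteKdF α β 1 = α := by
  simp [hermiteKdF]

lemma hermiteKdF_mul_mul_sq (t α β : K) (n : ℕ) :
    hermiteKdF (t * α) (t ^ 2 * β) n = t ^ n * hermiteKdF α β n := by
  rw [hermiteKdF, hermiteKdF, Finset.mul_sum]
  refine Finset.sum_congr rfl fun k hk => ?_
  have hk : n - 2 * k + 2 * k = n := by have := Finset.mem_range.1 hk; omega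
  rw [mul_pow, mul_pow, ← pow_mul]
  nth_rw 4 [← hk]
  ring

variable [CharZero K]

lemma sum_sub_mul_eq_mul_hermiteKdF (α β : K) (n : ℕ) :
    ∑ k ∈ Finset.range ((n + 1) / 2 + 1), ((n : K) + 1 - 2 * k) *
      (α ^ (n + 1 - 2 * k) / ((n + 1 - 2 * k).factorial : K) * (β ^ k / (k.factorial : K))) =
      α * hermiteKdF α β n := by
  have hsub : Finset.range (n / 2 + 1) ⊆ Finset.range ((n + 1) / 2 + 1) :=
    Finset.range_subset_range.2 (by omega)
  rw [hermiteKdF, Finset.mul_sum, ← Finset.sum_subset hsub fun k hk hk' => ?_]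
  · refine Finset.sum_congr rfl fun k hk => ?_
    obtain ⟨j, rfl⟩ := Nat.exists_eq_add_of_le
      (show 2 * k ≤ n by have := Finset.mem_range.1 hk; omega)
    rw [show 2 * k + j + 1 - 2 * k = j + 1 by omega, show 2 * k + j - 2 * k = j by omega,
      Nat.factorial_succ]
    have hj : (j : K) + 1 ≠ 0 := Nat.cast_add_one_ne_zero j
    push_cast
    field_simp
    ring
  · simp only [Finset.mem_range] at hk hk'
    have hn : (n : K) + 1 = 2 * k := by exact_mod_cast (show n + 1 = 2 * k by omega)
    rw [hn, sub_self, zero_mul]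

lemma sum_two_mul_mul_eq_mul_hermiteKdF (α β : K) (n : ℕ) :
    ∑ k ∈ Finset.range ((n + 2) / 2 + 1), 2 * (k : K) *
      (α ^ (n + 2 - 2 * k) / ((n + 2 - 2 * k).factorial : K) * (β ^ k / (k.factorial : K))) =
      2 * β * hermiteKdF α β n := by
  rw [show (n + 2) / 2 = n / 2 + 1 by omega, Finset.sum_range_succ', hermiteKdF, Finset.mul_sum,
    Nat.cast_zero, mul_zero, zero_mul, add_zero]
  refine Finset.sum_congr rfl fun k _ => ?_
  have hk : (k : K) + 1 ≠ 0 := Nat.cast_add_one_ne_zero k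
  rw [show n + 2 - 2 * (k + 1) = n - 2 * k by omega, Nat.factorial_succ, pow_succ]
  push_cast
  field_simp

lemma hermiteKdF_add_left (a b β : K) (n : ℕ) :
    hermiteKdF (a + b) β n =
      ∑ m ∈ Finset.Icc ((n + 1) / 2) n, ∑ k ∈ Finset.range (2 * m - n + 1),
        a ^ k / (k.factorial : K) * (b ^ (2 * m - n - k) / ((2 * m - n - k).factorial : K)) *
          (β ^ (n - m) / ((n - m).factorial : K)) := by
  have hreflect : hermiteKdF (a + b) β n = ∑ m ∈ Finset.Icc ((n + 1) / 2) n,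
      (a + b) ^ (2 * m - n) / ((2 * m - n).factorial : K) *
        (β ^ (n - m) / ((n - m).factorial : K)) := by
    refine Finset.sum_nbij' (fun k => n - k) (fun m => n - m) ?_ ?_ ?_ ?_ fun k hk => ?_
    any_goals simp only [Finset.mem_range, Finset.mem_Icc]; omega
    have hk := Finset.mem_range.1 hk
    rw [show n - (n - k) = k by omega, show 2 * (n - k) - n = n - 2 * k by omega]
  rw [hreflect]
  refine Finset.sum_congr rfl fun m _ => ?_
  rw [add_pow, Finset.sum_div, Finset.sum_mul]
  refine Finset.sum_congr rfl fun k hk => ?_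
  rw [Nat.cast_choose K (Finset.mem_range_succ_iff.1 hk)]
  have hfact : ((2 * m - n).factorial : K) ≠ 0 := Nat.cast_ne_zero.2 (Nat.factorial_ne_zero _)
  field_simp

lemma hermiteKdF_add_two (α β : K) (n : ℕ) :
    ((n : K) + 2) * hermiteKdF α β (n + 2) =
      α * hermiteKdF α β (n + 1) + 2 * β * hermiteKdF α β n := by
  rw [← sum_sub_mul_eq_mul_hermiteKdF, ← sum_two_mul_mul_eq_mul_hermiteKdF, hermiteKdF,
    Finset.mul_sum, ← Finset.sum_add_distrib]
  refine Finset.sum_congr rfl fun k _ => ?_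
  push_cast
  ring

end Hermite

section HermiteRemainder

/-- The remainder of order `N` of the expansion of `exp (α * t + β * t ^ 2)` in powers of `t`. -/
noncomputable def hermiteRemainder (α β : ℂ) (N : ℕ) (t : ℂ) : ℂ :=
  Complex.exp (t * α + t ^ 2 * β) - ∑ n ∈ Finset.range N, t ^ n * hermiteKdF α β n

variable (α β : ℂ)

lemma hermiteRemainder_succ (N : ℕ) (t : ℂ) :
    hermiteRemainder α β (N + 1) t = hermiteRemainder α β N t - t ^ N * hermiteKdF α β N := by
  rw [hermiteRemainder, Finset.sum_range_succ, ← sub_sub, hermiteRemainder]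

lemma hermiteRemainder_zero_right (N : ℕ) : hermiteRemainder α β (N + 1) 0 = 0 := by
  simp [hermiteRemainder, Finset.sum_range_succ']

-- For `N = 0` the truncated index `N - 1` is `0`, which is what the formula needs.
lemma hasDerivAt_hermiteRemainder (N : ℕ) (t : ℂ) :
    HasDerivAt (hermiteRemainder α β (N + 1))
      (α * hermiteRemainder α β N t + 2 * β * t * hermiteRemainder α β (N - 1) t) t := by
  induction N with
  | zero =>
    have hexp : HasDerivAt (fun t : ℂ => Complex.exp (t * α + t ^ 2 * β) - 1)
        (Complex.exp (t * α + t ^ 2 * β) * (1 * α + 2 * t * β)) t := by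
      simpa using ((((hasDerivAt_id t).mul_const α).add
        ((hasDerivAt_pow 2 t).mul_const β)).cexp).sub_const 1
    convert hexp using 1
    · ext; simp [hermiteRemainder]
    · simp only [hermiteRemainder, Finset.range_zero, Finset.sum_empty]
      ring
  | succ N ih =>
    rw [funext (hermiteRemainder_succ α β (N + 1))]
    refine (ih.fun_sub ((hasDerivAt_pow (N + 1) t).mul_const _)).congr_deriv ?_
    rcases N with _ | N
    · simp only [hermiteRemainder_succ, hermiteKdF_zero]
      rw [zero_add, hermiteKdF_one]
      push_cast
      ring
    · have hrec := hermiteKdF_add_two α β N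
      simp only [hermiteRemainder_succ, Nat.add_sub_cancel]
      push_cast
      linear_combination -t ^ (N + 1) * hrec

variable {α β}

lemma norm_deriv_hermiteRemainder_le {M τ : ℝ} (hτ0 : 0 ≤ τ) (hτ1 : τ ≤ 1) {N : ℕ}
    (h : ∀ n ≤ N, ‖hermiteRemainder α β n τ‖ ≤ ((1 + ‖α‖ + 2 * ‖β‖) * τ) ^ n * M) :
    ‖α * hermiteRemainder α β N τ + 2 * β * τ * hermiteRemainder α β (N - 1) τ‖ ≤
      (1 + ‖α‖ + 2 * ‖β‖) * (((1 + ‖α‖ + 2 * ‖β‖) * τ) ^ N * M) := by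
  set K := 1 + ‖α‖ + 2 * ‖β‖ with hK
  have hK1 : 1 ≤ K := by linarith [norm_nonneg α, norm_nonneg β]
  have hpred : τ * ‖hermiteRemainder α β (N - 1) τ‖ ≤ (K * τ) ^ N * M := by
    rcases N with _ | N
    · exact (mul_le_of_le_one_left (norm_nonneg _) hτ1).trans (h 0 le_rfl)
    · calc τ * ‖hermiteRemainder α β N τ‖ ≤ (K * τ) * ((K * τ) ^ N * M) := by
            gcongr
            · exact le_mul_of_one_le_left hτ0 hK1
            · exact h N N.le_succ
        _ = (K * τ) ^ (N + 1) * M := by ring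
  have hB : 0 ≤ (K * τ) ^ N * M := (norm_nonneg _).trans (h N le_rfl)
  calc _ ≤ ‖α‖ * ‖hermiteRemainder α β N τ‖ +
          2 * ‖β‖ * (τ * ‖hermiteRemainder α β (N - 1) τ‖) := by
        refine (norm_add_le _ _).trans_eq ?_
        simp only [norm_mul, Complex.norm_real, Real.norm_of_nonneg hτ0, Complex.norm_ofNat]
        ring
    _ ≤ ‖α‖ * ((K * τ) ^ N * M) + 2 * ‖β‖ * ((K * τ) ^ N * M) := by
        gcongr
        exact h N le_rfl
    _ ≤ K * ((K * τ) ^ N * M) := by rw [hK]; linarith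

lemma norm_hermiteRemainder_le {ε M : ℝ} (hε : ε ≤ 1)
    (hM : ∀ t ∈ Set.Icc 0 ε, ‖Complex.exp (t * α + t ^ 2 * β)‖ ≤ M) (N : ℕ) :
    ∀ t ∈ Set.Icc 0 ε, ‖hermiteRemainder α β N t‖ ≤ ((1 + ‖α‖ + 2 * ‖β‖) * t) ^ N * M := by
  induction N using Nat.strong_induction_on with | _ N ih =>
  intro t ht
  have hM0 : 0 ≤ M := (norm_nonneg _).trans (hM t ht)
  rcases N with _ | N
  · simpa [hermiteRemainder] using hM t ht
  have hderiv (τ : ℝ) : HasDerivAt (fun τ : ℝ => hermiteRemainder α β (N + 1) τ)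
      (α * hermiteRemainder α β N τ + 2 * β * τ * hermiteRemainder α β (N - 1) τ) τ :=
    (hasDerivAt_hermiteRemainder α β N τ).comp_ofReal
  have hbound (τ : ℝ) (hτ : τ ∈ Set.Ico 0 t) :
      ‖α * hermiteRemainder α β N τ + 2 * β * τ * hermiteRemainder α β (N - 1) τ‖ ≤
        (1 + ‖α‖ + 2 * ‖β‖) * (((1 + ‖α‖ + 2 * ‖β‖) * t) ^ N * M) := by
    have hτε : τ ∈ Set.Icc 0 ε := ⟨hτ.1, hτ.2.le.trans ht.2⟩
    refine (norm_deriv_hermiteRemainder_le hτ.1 (hτε.2.trans hε)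
      fun n hn => ih n (by omega) τ hτε).trans ?_
    have := hτ.1
    gcongr
    exact hτ.2.le
  have hmvt := norm_image_sub_le_of_norm_deriv_le_segment'
    (fun τ _ => (hderiv τ).hasDerivWithinAt) hbound t ⟨ht.1, le_rfl⟩
  rw [Complex.ofReal_zero, hermiteRemainder_zero_right, sub_zero, sub_zero] at hmvt
  exact hmvt.trans_eq (by ring)

end HermiteRemainder

/-! ### Gaussian moments -/

section GaussianMoments

lemma abs_pow_le_exp {l m : ℕ} (hlm : l ≤ m) (p : ℝ) : |p| ^ l ≤ Real.exp (m * |p|) :=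
  calc |p| ^ l ≤ Real.exp |p| ^ l :=
        pow_le_pow_left₀ (abs_nonneg p) (by linarith [Real.add_one_le_exp |p|]) l
    _ ≤ Real.exp |p| ^ m := pow_le_pow_right₀ (Real.one_le_exp (abs_nonneg p)) hlm
    _ = Real.exp (m * |p|) := (Real.exp_nat_mul _ _).symm

lemma integrable_exp_neg_mul_sq_add_mul_abs {κ : ℝ} (hκ : 0 < κ) (M : ℝ) :
    Integrable fun p : ℝ => Real.exp (-κ * p ^ 2 + M * |p|) := by
  refine ((integrable_exp_neg_mul_sq (half_pos hκ)).const_mul (Real.exp (M ^ 2 / (2 * κ)))).mono'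
    (by fun_prop) (ae_of_all _ fun p => ?_)
  have hsquare : M ^ 2 / (2 * κ) + -(κ / 2) * p ^ 2 - (-κ * p ^ 2 + M * |p|) =
      (κ * |p| - M) ^ 2 / (2 * κ) := by
    rw [← sq_abs p]
    field_simp
    ring
  rw [Real.norm_of_nonneg (Real.exp_pos _).le, ← Real.exp_add, Real.exp_le_exp, ← sub_nonneg,
    hsquare]
  positivity

variable {B : ℂ} (hB : 0 < B.re) (C : ℂ)
include hB

lemma integrable_pow_mul_cexp_quadratic (l : ℕ) :
    Integrable fun p : ℝ => (p : ℂ) ^ l * Complex.exp (-B * p ^ 2 + C * p) := by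
  refine (integrable_exp_neg_mul_sq_add_mul_abs hB (l + ‖C‖)).mono' (by fun_prop)
    (ae_of_all _ fun p => ?_)
  have hlin : (C * p).re ≤ ‖C‖ * |p| := by
    simpa using Complex.re_le_norm (C * p)
  have hsq : (-B * (p : ℂ) ^ 2).re = -B.re * p ^ 2 := by
    rw [← Complex.ofReal_pow, Complex.re_mul_ofReal, Complex.neg_re]
  calc ‖(p : ℂ) ^ l * Complex.exp (-B * p ^ 2 + C * p)‖
      = |p| ^ l * Real.exp (-B.re * p ^ 2 + (C * p).re) := by
        rw [norm_mul, norm_pow, Complex.norm_real, Real.norm_eq_abs, Complex.norm_exp,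
          Complex.add_re, hsq]
    _ ≤ Real.exp (l * |p|) * Real.exp (-B.re * p ^ 2 + ‖C‖ * |p|) := by
        gcongr
        exact abs_pow_le_exp le_rfl p
    _ = Real.exp (-B.re * p ^ 2 + (l + ‖C‖) * |p|) := by
        rw [← Real.exp_add]
        ring_nf

-- Integration by parts: the derivative of `p ^ l * exp (-B * p ^ 2 + C * p)` has integral zero.
lemma integral_pow_succ_mul_cexp_quadratic (l : ℕ) :
    2 * B * ∫ p : ℝ, (p : ℂ) ^ (l + 1) * Complex.exp (-B * p ^ 2 + C * p) =
      l * (∫ p : ℝ, (p : ℂ) ^ (l - 1) * Complex.exp (-B * p ^ 2 + C * p)) +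
        C * ∫ p : ℝ, (p : ℂ) ^ l * Complex.exp (-B * p ^ 2 + C * p) := by
  have hint := integrable_pow_mul_cexp_quadratic hB C
  have hderiv (p : ℝ) : HasDerivAt (fun p : ℝ => (p : ℂ) ^ l * Complex.exp (-B * p ^ 2 + C * p))
      (l * ((p : ℂ) ^ (l - 1) * Complex.exp (-B * p ^ 2 + C * p)) +
        C * ((p : ℂ) ^ l * Complex.exp (-B * p ^ 2 + C * p)) -
        2 * B * ((p : ℂ) ^ (l + 1) * Complex.exp (-B * p ^ 2 + C * p))) p := by
    have hid : HasDerivAt (fun u : ℝ => (u : ℂ)) 1 p := Complex.ofRealCLM.hasDerivAt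
    refine ((hid.fun_pow l).mul
      (((hid.fun_pow 2).const_mul (-B)).fun_add (hid.const_mul C)).cexp).congr_deriv ?_
    push_cast
    ring
  have hlow := ((hint (l - 1)).const_mul (l : ℂ)).fun_add ((hint l).const_mul C)
  have hzero := integral_eq_zero_of_hasDerivAt_of_integrable hderiv
    (hlow.sub ((hint (l + 1)).const_mul _)) (hint l)
  rw [integral_sub hlow ((hint (l + 1)).const_mul _),
    integral_add ((hint (l - 1)).const_mul _) ((hint l).const_mul _)] at hzero
  simp only [integral_const_mul] at hzero
  linear_combination -hzero

lemma integral_pow_mul_cexp_quadratic (l : ℕ) :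
    ∫ p : ℝ, (p : ℂ) ^ l * Complex.exp (-B * p ^ 2 + C * p) =
      (π / B) ^ (1 / 2 : ℂ) * Complex.exp (C ^ 2 / (4 * B)) *
        (l.factorial * hermiteKdF (C / (2 * B)) (1 / (4 * B)) l) := by
  have hB0 : B ≠ 0 := by rintro rfl; simp at hB
  have h2B : 2 * B ≠ 0 := mul_ne_zero two_ne_zero hB0
  have hrec := integral_pow_succ_mul_cexp_quadratic hB C
  have hzero : ∫ p : ℝ, (p : ℂ) ^ 0 * Complex.exp (-B * p ^ 2 + C * p) =
      (π / B) ^ (1 / 2 : ℂ) * Complex.exp (C ^ 2 / (4 * B)) := by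
    have hgauss := integral_cexp_quadratic (b := -B) (by simpa using hB) C 0
    simp only [add_zero, neg_neg] at hgauss
    simp only [pow_zero, one_mul, hgauss]
    rw [show 0 - C ^ 2 / (4 * -B) = C ^ 2 / (4 * B) by field_simp; ring]
  induction l using Nat.twoStepInduction with
  | zero => rw [hzero, Nat.factorial_zero, hermiteKdF_zero, Nat.cast_one, mul_one, mul_one]
  | one =>
    have hstep := hrec 0
    rw [Nat.cast_zero, zero_mul, zero_add, zero_add, hzero] at hstep
    refine mul_left_cancel₀ h2B (hstep.trans ?_)
    rw [Nat.factorial_one, hermiteKdF_one]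
    field_simp
    simp
  | more l ih ih' =>
    have hstep := hrec (l + 1)
    have hherm := hermiteKdF_add_two (C / (2 * B)) (1 / (4 * B)) l
    rw [Nat.add_sub_cancel, ih, ih'] at hstep
    have hscale : 2 * B * (C / (2 * B) * hermiteKdF (C / (2 * B)) (1 / (4 * B)) (l + 1) +
        2 * (1 / (4 * B)) * hermiteKdF (C / (2 * B)) (1 / (4 * B)) l) =
        C * hermiteKdF (C / (2 * B)) (1 / (4 * B)) (l + 1) +
          hermiteKdF (C / (2 * B)) (1 / (4 * B)) l := by
      field_simp
      ring
    refine mul_left_cancel₀ h2B (hstep.trans ?_)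
    rw [← hherm] at hscale
    simp only [Nat.factorial_succ]
    push_cast
    linear_combination -(π / B : ℂ) ^ (1 / 2 : ℂ) * Complex.exp (C ^ 2 / (4 * B)) *
      (l + 1) * l.factorial * hscale

end GaussianMoments

/-! ### Rotation of the line of integration -/

section Rotation

lemma hasDerivAt_rotate {f : ℂ → ℂ} (hf : Differentiable ℂ f) (u φ : ℝ) :
    HasDerivAt
      (fun φ : ℝ => Complex.exp (φ * Complex.I) * f (Complex.exp (φ * Complex.I) * u))
      (Complex.I * Complex.exp (φ * Complex.I) * (f (Complex.exp (φ * Complex.I) * u) +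
        Complex.exp (φ * Complex.I) * u * deriv f (Complex.exp (φ * Complex.I) * u))) φ := by
  have hexp : HasDerivAt (fun φ : ℝ => Complex.exp (φ * Complex.I))
      (Complex.I * Complex.exp (φ * Complex.I)) φ := by
    simpa [mul_comm] using ((hasDerivAt_id φ).ofReal_comp.mul_const Complex.I).cexp
  refine (hexp.mul ((hf _).hasDerivAt.scomp φ (hexp.mul_const (u : ℂ)))).congr_deriv ?_
  simp only [smul_eq_mul, Function.comp_apply]
  ring

lemma hasDerivAt_ofReal_mul_comp_mul {f : ℂ → ℂ} (hf : Differentiable ℂ f) (σ : ℂ) (u : ℝ) :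
    HasDerivAt (fun u : ℝ => (u : ℂ) * f (σ * u)) (f (σ * u) + σ * u * deriv f (σ * u)) u := by
  have hid : HasDerivAt (fun u : ℝ => (u : ℂ)) 1 u := Complex.ofRealCLM.hasDerivAt
  refine (hid.mul ((hf _).hasDerivAt.scomp u (hid.const_mul σ))).congr_deriv ?_
  simp only [smul_eq_mul, Function.comp_apply]
  ring

-- The derivative of the integrand in `φ` is a constant multiple of the `u`-derivative of
-- `u * f (exp (φ * I) * u)`, so it integrates to zero.
lemma hasDerivAt_integral_rotate {f : ℂ → ℂ} (hf : Differentiable ℂ f) {g : ℝ → ℝ}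
    (hg : Integrable g) {s : Set ℝ} (hs : IsOpen s)
    (hfg : ∀ φ ∈ s, ∀ u : ℝ, (1 + |u|) * ‖f (Complex.exp (φ * Complex.I) * u)‖ ≤ g u)
    (hfg' : ∀ φ ∈ s, ∀ u : ℝ, |u| * ‖deriv f (Complex.exp (φ * Complex.I) * u)‖ ≤ g u)
    {φ : ℝ} (hφ : φ ∈ s) :
    HasDerivAt (fun φ : ℝ => ∫ u : ℝ,
      Complex.exp (φ * Complex.I) * f (Complex.exp (φ * Complex.I) * u)) 0 φ := by
  have hcont := hf.continuous
  have hbound (ψ : ℝ) (hψ : ψ ∈ s) (u : ℝ) :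
      ‖Complex.I * Complex.exp (ψ * Complex.I) * (f (Complex.exp (ψ * Complex.I) * u) +
        Complex.exp (ψ * Complex.I) * u * deriv f (Complex.exp (ψ * Complex.I) * u))‖ ≤
        2 * g u := by
    have hadd := norm_add_le (f (Complex.exp (ψ * Complex.I) * u))
      (Complex.exp (ψ * Complex.I) * u * deriv f (Complex.exp (ψ * Complex.I) * u))
    have hmul : 0 ≤ |u| * ‖f (Complex.exp (ψ * Complex.I) * u)‖ := by positivity
    simp only [norm_mul, Complex.norm_exp_ofReal_mul_I, Complex.norm_I, one_mul, Complex.norm_real,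
      Real.norm_eq_abs] at hadd ⊢
    linarith [hfg ψ hψ u, hfg' ψ hψ u]
  have hint (l : ℕ) (hl : l ≤ 1) :
      Integrable fun u : ℝ => (u : ℂ) ^ l * f (Complex.exp (φ * Complex.I) * u) := by
    refine hg.mono' (by fun_prop) (ae_of_all _ fun u => le_trans ?_ (hfg φ hφ u))
    rw [norm_mul, norm_pow, Complex.norm_real, Real.norm_eq_abs]
    gcongr
    interval_cases l <;> simp
  have hmain := hasDerivAt_integral_of_dominated_loc_of_deriv_le (μ := volume) (hs.mem_nhds hφ)
    (Eventually.of_forall fun ψ => by fun_prop)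
    (by simpa using (hint 0 zero_le_one).const_mul (Complex.exp (φ * Complex.I)))
    (by have := measurable_deriv f; fun_prop) (ae_of_all _ fun u ψ hψ => hbound ψ hψ u)
    (hg.const_mul 2) (ae_of_all _ fun u ψ _ => hasDerivAt_rotate hf u ψ)
  have hzero := integral_eq_zero_of_hasDerivAt_of_integrable
    (fun u => (hasDerivAt_ofReal_mul_comp_mul hf (Complex.exp (φ * Complex.I)) u).const_mul
      (Complex.I * Complex.exp (φ * Complex.I)))
    hmain.1 (by simpa using (hint 1 le_rfl).const_mul _)
  exact hzero ▸ hmain.2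

lemma integral_rotate_eq {f : ℂ → ℂ} (hf : Differentiable ℂ f) {g : ℝ → ℝ} (hg : Integrable g)
    {s : Set ℝ} (hs : IsOpen s) (hs' : IsPreconnected s)
    (hfg : ∀ φ ∈ s, ∀ u : ℝ, (1 + |u|) * ‖f (Complex.exp (φ * Complex.I) * u)‖ ≤ g u)
    (hfg' : ∀ φ ∈ s, ∀ u : ℝ, |u| * ‖deriv f (Complex.exp (φ * Complex.I) * u)‖ ≤ g u)
    {φ ψ : ℝ} (hφ : φ ∈ s) (hψ : ψ ∈ s) :
    Complex.exp (φ * Complex.I) * ∫ u : ℝ, f (Complex.exp (φ * Complex.I) * u) =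
      Complex.exp (ψ * Complex.I) * ∫ u : ℝ, f (Complex.exp (ψ * Complex.I) * u) := by
  have hderiv (χ : ℝ) (hχ : χ ∈ s) := hasDerivAt_integral_rotate hf hg hs hfg hfg' hχ
  simp only [← integral_const_mul]
  exact hs.is_const_of_deriv_eq_zero hs'
    (fun χ hχ => (hderiv χ hχ).differentiableAt.differentiableWithinAt)
    (fun χ hχ => (hderiv χ hχ).deriv) hφ hψ

end Rotation

/-! ### The integrand of the Pearcey integral -/

section QuarticExp

/-- The entire function whose integral over `ℝ` is `2 * P x y` when `w = I * y`. -/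
noncomputable def quarticExp (x w z : ℂ) : ℂ :=
  Complex.exp (-z ^ 4 - x * z ^ 2 + w * z)

variable (x w : ℂ)

lemma hasDerivAt_quarticExp (z : ℂ) :
    HasDerivAt (quarticExp x w) (quarticExp x w z * (-(4 * z ^ 3) - 2 * x * z + w)) z := by
  refine (((hasDerivAt_pow 4 z).fun_neg.fun_sub
    ((hasDerivAt_pow 2 z).const_mul x)).fun_add ((hasDerivAt_id z).const_mul w)).cexp.congr_deriv ?_
  rw [quarticExp, id]
  push_cast
  ring

lemma differentiable_quarticExp : Differentiable ℂ (quarticExp x w) :=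
  fun z => (hasDerivAt_quarticExp x w z).differentiableAt

lemma norm_quarticExp_mul_le {κ : ℝ} (hκ : 0 < κ) {σ : ℂ} (hσ : ‖σ‖ = 1)
    (hσκ : κ ≤ (σ ^ 4).re) (u : ℝ) :
    ‖quarticExp x w (σ * u)‖ ≤
      Real.exp ((‖x‖ + 2) ^ 2 / (4 * κ) + ‖w‖ ^ 2 / 4) * Real.exp (-1 * u ^ 2) := by
  rw [quarticExp, Complex.norm_exp, ← Real.exp_add, Real.exp_le_exp]
  have hquartic : (-(σ * u) ^ 4 : ℂ).re = -((σ ^ 4).re * u ^ 4) := by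
    rw [Complex.neg_re, mul_pow, ← Complex.ofReal_pow, Complex.re_mul_ofReal]
  have hquad : (-(x * (σ * u) ^ 2)).re ≤ ‖x‖ * u ^ 2 :=
    (Complex.re_le_norm _).trans_eq (by simp [hσ])
  have hlin : (w * (σ * u)).re ≤ ‖w‖ * |u| :=
    (Complex.re_le_norm _).trans_eq (by simp [hσ])
  have hlin' : ‖w‖ * |u| ≤ u ^ 2 + ‖w‖ ^ 2 / 4 := by
    rw [← sq_abs u]
    linarith [sq_nonneg (|u| - ‖w‖ / 2)]
  have hquad' : (‖x‖ + 2) * u ^ 2 ≤ κ * u ^ 4 + (‖x‖ + 2) ^ 2 / (4 * κ) := by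
    have hsquare : κ * u ^ 4 + (‖x‖ + 2) ^ 2 / (4 * κ) - (‖x‖ + 2) * u ^ 2 =
        (2 * κ * u ^ 2 - (‖x‖ + 2)) ^ 2 / (4 * κ) := by
      field_simp
      ring
    rw [← sub_nonneg, hsquare]
    positivity
  have hκu : κ * u ^ 4 ≤ (σ ^ 4).re * u ^ 4 := by gcongr
  rw [Complex.add_re, sub_eq_add_neg, Complex.add_re, hquartic]
  linarith

lemma integrable_quarticExp : Integrable fun u : ℝ => quarticExp x w u := by
  have hnorm (u : ℝ) := norm_quarticExp_mul_le x w one_pos (σ := 1) (by simp) (by simp) u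
  simp only [one_mul] at hnorm
  exact ((integrable_exp_neg_mul_sq one_pos).const_mul _).mono'
    ((differentiable_quarticExp x w).continuous.comp Complex.continuous_ofReal).aestronglyMeasurable
    (ae_of_all _ hnorm)

lemma P_eq_integral_quarticExp (y : ℂ) :
    P x y = 1 / 2 * ∫ u : ℝ, quarticExp x (Complex.I * y) u := by
  have hint := integrable_quarticExp x (Complex.I * y)
  have hsplit := intervalIntegral.integral_Iic_add_Ioi (b := (0 : ℝ))
    hint.integrableOn hint.integrableOn
  have hreflect := integral_comp_neg_Ioi (0 : ℝ) fun u : ℝ => quarticExp x (Complex.I * y) u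
  rw [neg_zero] at hreflect
  rw [← hsplit, ← hreflect, ← integral_add hint.comp_neg.integrableOn hint.integrableOn,
    ← integral_const_mul, P]
  refine integral_congr_ae (ae_of_all _ fun t => ?_)
  simp only [quarticExp, Complex.cos, Complex.exp_add]
  push_cast
  ring_nf

lemma cos_four_mul_le_re_exp_mul_I_pow_four {b φ : ℝ} (hb : b ≤ π / 4) (hφ : |φ| ≤ b) :
    Real.cos (4 * b) ≤ (Complex.exp (φ * Complex.I) ^ 4).re := by
  have hfour : ((4 : ℕ) : ℂ) * (φ * Complex.I) = ((4 * φ : ℝ) : ℂ) * Complex.I := by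
    push_cast
    ring
  rw [← Complex.exp_nat_mul, hfour, Complex.exp_ofReal_mul_I_re, ← Real.cos_abs (4 * φ), abs_mul,
    abs_of_pos (by norm_num : (0 : ℝ) < 4)]
  exact Real.cos_le_cos_of_nonneg_of_le_pi (by positivity) (by linarith) (by linarith)

lemma norm_mul_norm_quartic_deriv_le (z : ℂ) :
    ‖z‖ * ‖-(4 * z ^ 3) - 2 * x * z + w‖ ≤ (4 + 2 * ‖x‖ + ‖w‖) * Real.exp (4 * ‖z‖) := by
  have hpow (l : ℕ) (hl : l ≤ 4) : ‖z‖ ^ l ≤ Real.exp (4 * ‖z‖) := by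
    simpa using abs_pow_le_exp hl ‖z‖
  have hnorm : ‖-(4 * z ^ 3) - 2 * x * z + w‖ ≤ 4 * ‖z‖ ^ 3 + 2 * ‖x‖ * ‖z‖ + ‖w‖ :=
    (norm_add_le _ _).trans (add_le_add_left ((norm_sub_le _ _).trans_eq (by simp)) _)
  calc ‖z‖ * ‖-(4 * z ^ 3) - 2 * x * z + w‖
      ≤ ‖z‖ * (4 * ‖z‖ ^ 3 + 2 * ‖x‖ * ‖z‖ + ‖w‖) := by gcongr
    _ = 4 * ‖z‖ ^ 4 + 2 * ‖x‖ * ‖z‖ ^ 2 + ‖w‖ * ‖z‖ ^ 1 := by ring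
    _ ≤ 4 * Real.exp (4 * ‖z‖) + 2 * ‖x‖ * Real.exp (4 * ‖z‖) + ‖w‖ * Real.exp (4 * ‖z‖) := by
      gcongr <;> exact hpow _ (by norm_num)
    _ = (4 + 2 * ‖x‖ + ‖w‖) * Real.exp (4 * ‖z‖) := by ring

lemma integral_quarticExp_rotate {φ : ℝ} (hφ : |φ| < π / 8) :
    Complex.exp (φ * Complex.I) * ∫ u : ℝ, quarticExp x w (Complex.exp (φ * Complex.I) * u) =
      ∫ u : ℝ, quarticExp x w u := by
  obtain ⟨b, hφb, hb⟩ := exists_between hφ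
  have hκ : 0 < Real.cos (4 * b) :=
    Real.cos_pos_of_mem_Ioo ⟨by linarith [abs_nonneg φ, Real.pi_pos], by linarith⟩
  set D := Real.exp ((‖x‖ + 2) ^ 2 / (4 * Real.cos (4 * b)) + ‖w‖ ^ 2 / 4)
  have hdom {ψ : ℝ} (hψ : ψ ∈ Set.Ioo (-b) b) (u : ℝ) {X : ℝ}
      (hX : X ≤ (4 + 2 * ‖x‖ + ‖w‖) * Real.exp (4 * |u|)) :
      X * ‖quarticExp x w (Complex.exp (ψ * Complex.I) * u)‖ ≤
        (4 + 2 * ‖x‖ + ‖w‖) * (D * Real.exp (-1 * u ^ 2 + 4 * |u|)) := by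
    have hnorm : _ ≤ D * _ := norm_quarticExp_mul_le x w hκ (Complex.norm_exp_ofReal_mul_I ψ)
      (cos_four_mul_le_re_exp_mul_I_pow_four (by linarith [Real.pi_pos]) (abs_lt.2 hψ).le) u
    refine (mul_le_mul hX hnorm (norm_nonneg _) (by positivity)).trans_eq ?_
    rw [Real.exp_add]
    ring
  have hrotate := integral_rotate_eq (differentiable_quarticExp x w)
    (((integrable_exp_neg_mul_sq_add_mul_abs one_pos 4).const_mul D).const_mul _)
    isOpen_Ioo isPreconnected_Ioo (fun ψ hψ u => hdom hψ u ?_) (fun ψ hψ u => ?_) (abs_lt.1 hφb)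
    (ψ := 0) ⟨by linarith [abs_nonneg φ], by linarith [abs_nonneg φ]⟩
  · simpa using hrotate
  · calc 1 + |u| ≤ 4 * Real.exp (4 * |u|) := by
          linarith [Real.add_one_le_exp (4 * |u|), abs_nonneg u]
      _ ≤ _ := by gcongr; linarith [norm_nonneg x, norm_nonneg w]
  · rw [(hasDerivAt_quarticExp x w _).deriv, norm_mul, mul_left_comm, mul_comm]
    refine hdom hψ u ?_
    simpa using norm_mul_norm_quartic_deriv_le x w (Complex.exp (ψ * Complex.I) * u)

end QuarticExp

/-! ### The expansion of the saddle point integral -/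

section SaddlePoint

/-- The quadratic part of the exponent at the saddle point. Writing `u = -z - p / z̄` in
`quarticExp x (-4 * z ^ 3) u` and `s = (z / ‖z‖) ^ 2`, the exponent is
`3 * z ^ 4 - x * z ^ 2 + saddleQuad x s p + ε * saddleCubic x s p + ε ^ 2 * saddleQuartic s p` with
`ε = ‖z‖ ^ (-2)`. -/
def saddleQuad (x s p : ℂ) : ℂ := -(6 * s ^ 2) * p ^ 2 + -(2 * x * s) * p

/-- The part of order `ε` of the exponent at the saddle point, see `saddleQuad`. -/
def saddleCubic (x s p : ℂ) : ℂ := -(x * s) * p ^ 2 + -(4 * s ^ 2) * p ^ 3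

/-- The part of order `ε ^ 2` of the exponent at the saddle point, see `saddleQuad`. -/
def saddleQuartic (s p : ℂ) : ℂ := -s ^ 2 * p ^ 4

/-- The Pearcey integral, centred and normalised at the saddle point of direction `s`, with scale
parameter `ε`. -/
noncomputable def saddleIntegral (x s : ℂ) (ε : ℝ) : ℂ :=
  ∫ p : ℝ, Complex.exp (saddleQuad x s p) *
    Complex.exp (ε * saddleCubic x s p + ε ^ 2 * saddleQuartic s p)

/-- The coefficient of `ε ^ n` in the asymptotic expansion of `saddleIntegral x s ε`. -/
noncomputable def saddleCoeff (x s : ℂ) (n : ℕ) : ℂ :=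
  ∫ p : ℝ, Complex.exp (saddleQuad x s p) * hermiteKdF (saddleCubic x s p) (saddleQuartic s p) n

variable (x : ℂ) {s : ℂ}

lemma exp_saddleQuad_mul_hermiteKdF (s p : ℂ) (n : ℕ) :
    Complex.exp (saddleQuad x s p) * hermiteKdF (saddleCubic x s p) (saddleQuartic s p) n =
      ∑ m ∈ Finset.Icc ((n + 1) / 2) n, ∑ k ∈ Finset.range (2 * m - n + 1),
        (-1) ^ m * x ^ k * 4 ^ (2 * m - n - k) * s ^ (2 * m - k) /
          ((k.factorial : ℂ) * ((2 * m - n - k).factorial : ℂ) * ((n - m).factorial : ℂ)) *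
        (p ^ (2 * m + n - k) * Complex.exp (-(6 * s ^ 2) * p ^ 2 + -(2 * x * s) * p)) := by
  rw [saddleCubic, hermiteKdF_add_left, Finset.mul_sum]
  refine Finset.sum_congr rfl fun m hm => ?_
  rw [Finset.mul_sum]
  refine Finset.sum_congr rfl fun k hk => ?_
  have hm := Finset.mem_Icc.1 hm
  have hk := Finset.mem_range.1 hk
  obtain ⟨i, rfl⟩ : ∃ i, n = m + i := ⟨n - m, by omega⟩
  obtain ⟨j, rfl⟩ : ∃ j, m = i + k + j := ⟨m - i - k, by omega⟩
  rw [show 2 * (i + k + j) - (i + k + j + i) - k = j by omega,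
    show i + k + j + i - (i + k + j) = i by omega,
    show 2 * (i + k + j) - k = 2 * i + k + 2 * j by omega,
    show 2 * (i + k + j) + (i + k + j + i) - k = 4 * i + 2 * k + 3 * j by omega,
    saddleQuad, saddleQuartic]
  simp only [mul_pow, neg_pow (x * s), neg_pow (4 * s ^ 2), neg_pow (s ^ 2)]
  ring

lemma integrable_pow_mul_exp_saddleQuad (hs : 0 < (s ^ 2).re) (l : ℕ) :
    Integrable fun p : ℝ =>
      (p : ℂ) ^ l * Complex.exp (-(6 * s ^ 2) * p ^ 2 + -(2 * x * s) * p) :=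
  integrable_pow_mul_cexp_quadratic (by simpa using hs) _ l

lemma integrable_exp_saddleQuad_mul_hermiteKdF (hs : 0 < (s ^ 2).re) (n : ℕ) :
    Integrable fun p : ℝ => Complex.exp (saddleQuad x s p) *
      hermiteKdF (saddleCubic x s p) (saddleQuartic s p) n := by
  simp only [exp_saddleQuad_mul_hermiteKdF]
  exact integrable_finsetSum _ fun m _ => integrable_finsetSum _ fun k _ =>
    (integrable_pow_mul_exp_saddleQuad x hs _).const_mul _

lemma re_saddlePhase_le {κ t : ℝ} (hs : ‖s‖ = 1) (hκ : κ ≤ (s ^ 2).re) (ht : 0 ≤ t)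
    (htx : t * ‖x‖ ≤ κ) (p : ℝ) :
    (saddleQuad x s p + (t * saddleCubic x s p + t ^ 2 * saddleQuartic s p)).re ≤
      -κ * p ^ 2 + 2 * ‖x‖ * |p| := by
  have hsplit : saddleQuad x s p + (t * saddleCubic x s p + t ^ 2 * saddleQuartic s p) =
      -((p ^ 2 * ((2 + t * p) ^ 2 + 2) : ℝ) * s ^ 2) - (2 * p + t * p ^ 2 : ℝ) * (x * s) := by
    rw [saddleQuad, saddleCubic, saddleQuartic]
    push_cast
    ring
  have hlin : -((2 * p + t * p ^ 2) * (x * s).re) ≤ 2 * ‖x‖ * |p| + t * ‖x‖ * p ^ 2 := by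
    have hnorm : |(x * s).re| ≤ ‖x‖ := by simpa [hs] using Complex.abs_re_le_norm (x * s)
    have habs : |2 * p + t * p ^ 2| ≤ 2 * |p| + t * p ^ 2 := by
      refine (abs_add_le _ _).trans_eq ?_
      rw [abs_mul, abs_two, abs_of_nonneg (by positivity : 0 ≤ t * p ^ 2)]
    calc -((2 * p + t * p ^ 2) * (x * s).re) ≤ |2 * p + t * p ^ 2| * |(x * s).re| :=
          (neg_le_abs _).trans_eq (abs_mul _ _)
      _ ≤ (2 * |p| + t * p ^ 2) * ‖x‖ := by gcongr
      _ = 2 * ‖x‖ * |p| + t * ‖x‖ * p ^ 2 := by ring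
  have hquad : 2 * κ * p ^ 2 ≤ p ^ 2 * ((2 + t * p) ^ 2 + 2) * (s ^ 2).re := by
    have hκ0 : 0 ≤ κ := (by positivity : 0 ≤ t * ‖x‖).trans htx
    nlinarith [mul_le_mul_of_nonneg_left hκ (by positivity : 0 ≤ p ^ 2 * ((2 + t * p) ^ 2 + 2)),
      (by positivity : 0 ≤ κ * (p ^ 2 * (2 + t * p) ^ 2))]
  have hcross : t * ‖x‖ * p ^ 2 ≤ κ * p ^ 2 := by gcongr
  rw [hsplit, Complex.sub_re, Complex.neg_re, Complex.re_ofReal_mul, Complex.re_ofReal_mul]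
  linarith

lemma one_add_norm_saddleCubic_add_le (hs : ‖s‖ = 1) (p : ℝ) :
    1 + ‖saddleCubic x s p‖ + 2 * ‖saddleQuartic s p‖ ≤ (7 + ‖x‖) * Real.exp (4 * |p|) := by
  have hpow (l : ℕ) (hl : l ≤ 4) : |p| ^ l ≤ Real.exp (4 * |p|) := by
    simpa using abs_pow_le_exp hl p
  have hcubic : ‖saddleCubic x s p‖ ≤ ‖x‖ * |p| ^ 2 + 4 * |p| ^ 3 :=
    (norm_add_le _ _).trans_eq (by simp [hs])
  have hquartic : ‖saddleQuartic s p‖ = |p| ^ 4 := by simp [saddleQuartic, hs]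
  calc 1 + ‖saddleCubic x s p‖ + 2 * ‖saddleQuartic s p‖
      ≤ |p| ^ 0 + (‖x‖ * |p| ^ 2 + 4 * |p| ^ 3) + 2 * |p| ^ 4 := by
        rw [hquartic, pow_zero]
        gcongr
    _ ≤ Real.exp (4 * |p|) + (‖x‖ * Real.exp (4 * |p|) + 4 * Real.exp (4 * |p|)) +
          2 * Real.exp (4 * |p|) := by
        gcongr <;> exact hpow _ (by norm_num)
    _ = (7 + ‖x‖) * Real.exp (4 * |p|) := by ring

lemma norm_exp_saddleQuad_mul_hermiteRemainder_le {κ ε : ℝ} (hs : ‖s‖ = 1) (hκ : κ ≤ (s ^ 2).re)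
    (hε0 : 0 ≤ ε) (hε1 : ε ≤ 1) (hεx : ε * ‖x‖ ≤ κ) (N : ℕ) (p : ℝ) :
    ‖Complex.exp (saddleQuad x s p) *
        hermiteRemainder (saddleCubic x s p) (saddleQuartic s p) N ε‖ ≤
      ε ^ N * ((7 + ‖x‖) ^ N * Real.exp (-κ * p ^ 2 + (2 * ‖x‖ + 4 * N) * |p|)) := by
  set R := -κ * p ^ 2 + 2 * ‖x‖ * |p| with hR
  have hM (t : ℝ) (ht : t ∈ Set.Icc 0 ε) :
      ‖Complex.exp (t * saddleCubic x s p + t ^ 2 * saddleQuartic s p)‖ ≤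
        Real.exp (R - (saddleQuad x s p).re) := by
    have htx : t * ‖x‖ ≤ κ := (mul_le_mul_of_nonneg_right ht.2 (norm_nonneg x)).trans hεx
    rw [Complex.norm_exp, Real.exp_le_exp, le_sub_iff_add_le', ← Complex.add_re]
    exact re_saddlePhase_le x hs hκ ht.1 htx p
  have hrem := norm_hermiteRemainder_le hε1 hM N ε ⟨hε0, le_rfl⟩
  rw [norm_mul, Complex.norm_exp]
  calc Real.exp (saddleQuad x s p).re *
        ‖hermiteRemainder (saddleCubic x s p) (saddleQuartic s p) N ε‖
      ≤ Real.exp (saddleQuad x s p).re *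
          (((7 + ‖x‖) * Real.exp (4 * |p|) * ε) ^ N * Real.exp (R - (saddleQuad x s p).re)) := by
        refine mul_le_mul_of_nonneg_left (hrem.trans ?_) (Real.exp_pos _).le
        gcongr
        exact one_add_norm_saddleCubic_add_le x hs p
    _ = ε ^ N * ((7 + ‖x‖) ^ N * (Real.exp (N * (4 * |p|)) *
          (Real.exp (saddleQuad x s p).re * Real.exp (R - (saddleQuad x s p).re)))) := by
        rw [mul_pow, mul_pow, Real.exp_nat_mul]
        ring
    _ = _ := by
        rw [← Real.exp_add, ← Real.exp_add, hR]
        ring_nf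

lemma integrable_exp_saddleQuad_mul_hermiteRemainder {κ ε : ℝ} (hκ0 : 0 < κ) (hs : ‖s‖ = 1)
    (hκ : κ ≤ (s ^ 2).re) (hε0 : 0 ≤ ε) (hε1 : ε ≤ 1) (hεx : ε * ‖x‖ ≤ κ) (N : ℕ) :
    Integrable fun p : ℝ => Complex.exp (saddleQuad x s p) *
      hermiteRemainder (saddleCubic x s p) (saddleQuartic s p) N ε := by
  refine (((integrable_exp_neg_mul_sq_add_mul_abs hκ0 _).const_mul _).const_mul _).mono' ?_
    (ae_of_all _ (norm_exp_saddleQuad_mul_hermiteRemainder_le x hs hκ hε0 hε1 hεx N))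
  unfold hermiteRemainder hermiteKdF saddleQuad saddleCubic saddleQuartic
  fun_prop

lemma saddleIntegral_sub_sum_saddleCoeff {κ ε : ℝ} (hκ0 : 0 < κ) (hs : ‖s‖ = 1)
    (hκ : κ ≤ (s ^ 2).re) (hε0 : 0 ≤ ε) (hε1 : ε ≤ 1) (hεx : ε * ‖x‖ ≤ κ) (N : ℕ) :
    saddleIntegral x s ε - ∑ n ∈ Finset.range N, (ε : ℂ) ^ n * saddleCoeff x s n =
      ∫ p : ℝ, Complex.exp (saddleQuad x s p) *
        hermiteRemainder (saddleCubic x s p) (saddleQuartic s p) N ε := by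
  induction N with
  | zero => simp [saddleIntegral, hermiteRemainder]
  | succ N ih =>
    have hterm := (integrable_exp_saddleQuad_mul_hermiteKdF x (hκ0.trans_le hκ) N).const_mul
      ((ε : ℂ) ^ N)
    rw [Finset.sum_range_succ, ← sub_sub, ih, saddleCoeff, ← integral_const_mul, ← integral_sub
      (integrable_exp_saddleQuad_mul_hermiteRemainder x hκ0 hs hκ hε0 hε1 hεx N) hterm]
    exact integral_congr_ae (ae_of_all _ fun p => by simp only [hermiteRemainder_succ]; ring)

lemma exists_norm_saddleIntegral_sub_le {κ : ℝ} (hκ0 : 0 < κ) (N : ℕ) :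
    ∃ C ε₀ : ℝ, 0 < ε₀ ∧ ∀ s : ℂ, ‖s‖ = 1 → κ ≤ (s ^ 2).re → ∀ ε ∈ Set.Icc 0 ε₀,
      ‖saddleIntegral x s ε - ∑ n ∈ Finset.range N, (ε : ℂ) ^ n * saddleCoeff x s n‖ ≤
        C * ε ^ N := by
  refine ⟨∫ p : ℝ, (7 + ‖x‖) ^ N * Real.exp (-κ * p ^ 2 + (2 * ‖x‖ + 4 * N) * |p|),
    min 1 (κ / (‖x‖ + 1)), by positivity, fun s hs hκ ε ⟨hε0, hε⟩ => ?_⟩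
  have hε1 : ε ≤ 1 := hε.trans (min_le_left _ _)
  have hεx : ε * ‖x‖ ≤ κ := by
    have hmul := (le_div_iff₀ (by positivity)).1 (hε.trans (min_le_right _ _))
    linarith
  rw [saddleIntegral_sub_sum_saddleCoeff x hκ0 hs hκ hε0 hε1 hεx, mul_comm, ← integral_const_mul]
  exact norm_integral_le_of_norm_le
    (((integrable_exp_neg_mul_sq_add_mul_abs hκ0 _).const_mul _).const_mul _)
    (ae_of_all _ (norm_exp_saddleQuad_mul_hermiteRemainder_le x hs hκ hε0 hε1 hεx N))

end SaddlePoint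

/-! ### The coefficients `A_n(x)` -/

section Coefficients

/-- The real cube root `4 ^ (1 / 3) = 2 ^ (2 / 3)`, in which all fractional powers of `2` and `4` of
the expansion are expressed. -/
noncomputable def cbrtFour : ℝ := 4 ^ ((1 : ℝ) / 3)

lemma cbrtFour_pos : 0 < cbrtFour := by
  unfold cbrtFour
  positivity

lemma ofReal_cbrtFour_ne_zero : (cbrtFour : ℂ) ≠ 0 :=
  Complex.ofReal_ne_zero.2 cbrtFour_pos.ne'

lemma four_rpow_div_three (t : ℝ) : (4 : ℝ) ^ (t / 3) = cbrtFour ^ t := by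
  rw [cbrtFour, ← Real.rpow_mul (by norm_num)]
  ring_nf

lemma two_rpow_two_mul_div_three (t : ℝ) : (2 : ℝ) ^ (2 * t / 3) = cbrtFour ^ t := by
  rw [← four_rpow_div_three, mul_div_assoc, Real.rpow_mul zero_le_two]
  norm_num

lemma ofReal_cbrtFour_pow_three : (cbrtFour : ℂ) ^ 3 = 4 := by
  have hcube : cbrtFour ^ (3 : ℝ) = 4 := by
    rw [← four_rpow_div_three]
    norm_num
  exact_mod_cast hcube

lemma two_cpow_four_mul_div_three (j : ℕ) :
    (2 : ℂ) ^ (4 * (j : ℂ) / 3) = (cbrtFour : ℂ) ^ (2 * j) := by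
  have hreal : (2 : ℝ) ^ (4 * (j : ℝ) / 3) = cbrtFour ^ (2 * j) := by
    rw [← Real.rpow_natCast, ← two_rpow_two_mul_div_three]
    push_cast
    ring_nf
  rw [← Complex.ofReal_pow, ← hreal, Complex.ofReal_cpow zero_le_two]
  push_cast
  rfl

lemma c_eq_hermiteKdF (x : ℂ) (l : ℕ) :
    c x l = (cbrtFour : ℂ) ^ l * (l.factorial * hermiteKdF (x / 6) (1 / 24) l) := by
  rw [c, hermiteKdF, Finset.mul_sum, Finset.mul_sum]
  refine Finset.sum_congr rfl fun k hk => ?_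
  obtain ⟨j, rfl⟩ := Nat.exists_eq_add_of_le
    (show 2 * k ≤ l by have := Finset.mem_range.1 hk; omega)
  have htwo : (2 : ℝ) ^ (-((2 * k + j : ℕ) : ℝ) / 3 - (k : ℝ)) =
      cbrtFour ^ (2 * k + j) / 2 ^ (3 * k + j) := by
    rw [← Real.rpow_natCast, ← Real.rpow_natCast 2, ← two_rpow_two_mul_div_three,
      ← Real.rpow_sub two_pos]
    push_cast
    ring_nf
  have hthree : (3 : ℝ) ^ ((k : ℤ) - ((2 * k + j : ℕ) : ℤ)) = 1 / 3 ^ (k + j) := by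
    rw [show (k : ℤ) - ((2 * k + j : ℕ) : ℤ) = -((k + j : ℕ) : ℤ) by push_cast; ring, zpow_neg,
      zpow_natCast, one_div]
  have hsix : (3 : ℂ) ^ (k + j) * 2 ^ (3 * k + j) = 6 ^ j * 24 ^ k := by
    rw [show (24 : ℂ) = 3 * 2 ^ 3 by norm_num, show (6 : ℂ) = 3 * 2 by norm_num, mul_pow, mul_pow,
      ← pow_mul]
    ring
  rw [htwo, hthree, show 2 * k + j - 2 * k = j by omega, div_pow, div_pow, one_pow]
  push_cast
  calc _ = x ^ j * (cbrtFour : ℂ) ^ (2 * k + j) * (2 * k + j).factorial /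
        (k.factorial * j.factorial) / ((3 : ℂ) ^ (k + j) * 2 ^ (3 * k + j)) := by
        field_simp
    _ = _ := by
        rw [hsix]
        field_simp

variable (x : ℂ) {s : ℂ}

lemma integral_pow_mul_exp_saddleQuad (hs : 0 < s.re) (hs2 : 0 < (s ^ 2).re) (l : ℕ) :
    ∫ p : ℝ, (p : ℂ) ^ l * Complex.exp (-(6 * s ^ 2) * p ^ 2 + -(2 * x * s) * p) =
      √(π / 6) * Complex.exp (x ^ 2 / 6) / s * ((-1) ^ l / (cbrtFour * s) ^ l * c x l) := by
  have hs0 : s ≠ 0 := by rintro rfl; simp at hs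
  have hbase : (π : ℂ) / (6 * s ^ 2) = (√(π / 6) / s) ^ 2 := by
    rw [div_pow, ← Complex.ofReal_pow, Real.sq_sqrt (by positivity)]
    push_cast
    field_simp
  have hre : 0 < ((√(π / 6) : ℂ) / s).re := by
    rw [div_eq_mul_inv, Complex.re_ofReal_mul, Complex.inv_re]
    have := Complex.normSq_pos.2 hs0
    positivity
  have hsqrt : ((√(π / 6) / s : ℂ) ^ 2) ^ (1 / 2 : ℂ) = √(π / 6) / s := by
    have harg := abs_lt.1 (Complex.abs_arg_lt_pi_div_two_iff.2 (Or.inl hre))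
    have hinv := Complex.pow_cpow_nat_inv (x := (√(π / 6) : ℂ) / s) (n := 2) two_ne_zero
      (by push_cast; linarith) (by push_cast; linarith)
    simpa using hinv
  have hherm : hermiteKdF (-(2 * x * s) / (2 * (6 * s ^ 2))) (1 / (4 * (6 * s ^ 2))) l =
      (-1 / s) ^ l * hermiteKdF (x / 6) (1 / 24) l := by
    rw [← hermiteKdF_mul_mul_sq]
    congr 1
    all_goals field_simp
    all_goals ring
  have hexp : (-(2 * x * s)) ^ 2 / (4 * (6 * s ^ 2)) = x ^ 2 / 6 := by
    field_simp
    ring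
  rw [integral_pow_mul_cexp_quadratic (by simpa using hs2), hbase, hsqrt, hherm, hexp,
    c_eq_hermiteKdF, mul_pow, div_pow]
  have := ofReal_cbrtFour_ne_zero
  field_simp

lemma saddleCoeff_eq (hs : 0 < s.re) (hs2 : 0 < (s ^ 2).re) (n : ℕ) :
    saddleCoeff x s n =
      √(π / 6) * Complex.exp (x ^ 2 / 6) / s * (A x n / (cbrtFour ^ 2 * s) ^ n) := by
  have hs0 : s ≠ 0 := by rintro rfl; simp at hs
  have hc0 := ofReal_cbrtFour_ne_zero
  have hint := integrable_pow_mul_exp_saddleQuad x hs2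
  simp only [saddleCoeff, exp_saddleQuad_mul_hermiteKdF]
  rw [integral_finsetSum _ fun m _ => integrable_finsetSum _ fun k _ => (hint _).const_mul _, A,
    Finset.sum_div, Finset.mul_sum]
  refine Finset.sum_congr rfl fun m hm => ?_
  rw [integral_finsetSum _ fun k _ => (hint _).const_mul _, Finset.sum_div, Finset.mul_sum]
  refine Finset.sum_congr rfl fun k hk => ?_
  have hm := Finset.mem_Icc.1 hm
  have hk := Finset.mem_range.1 hk
  obtain ⟨i, rfl⟩ : ∃ i, n = m + i := ⟨n - m, by omega⟩
  obtain ⟨j, rfl⟩ : ∃ j, m = i + k + j := ⟨m - i - k, by omega⟩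
  rw [integral_const_mul, integral_pow_mul_exp_saddleQuad x hs hs2, a,
    show 2 * (i + k + j) - (i + k + j + i) - k = j by omega,
    show i + k + j + i - (i + k + j) = i by omega,
    show 2 * (i + k + j) - k = 2 * i + k + 2 * j by omega,
    show 2 * (i + k + j) + (i + k + j + i) - k = 4 * i + 2 * k + 3 * j by omega,
    two_cpow_four_mul_div_three, ← ofReal_cbrtFour_pow_three]
  have hsign : (-1 : ℂ) ^ (4 * i + 2 * k + 3 * j) = (-1) ^ (i + k + j + i + k) := by
    rw [show 4 * i + 2 * k + 3 * j = i + k + j + i + k + 2 * (i + j) by ring, pow_add, pow_mul]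
    simp
  rw [hsign]
  field_simp
  ring

end Coefficients

/-! ### The expansion in terms of the saddle point -/

section Sector

variable (x : ℂ) {z : ℂ}

lemma quarticExp_saddle_shift {ρ : ℝ} (hρ : ρ ≠ 0) (σ : ℂ) (p : ℝ) :
    quarticExp x (-4 * (ρ * σ) ^ 3) (σ * (-ρ⁻¹ * p - ρ : ℝ)) =
      Complex.exp (3 * (ρ * σ) ^ 4 - x * (ρ * σ) ^ 2) *
        (Complex.exp (saddleQuad x (σ ^ 2) p) *
          Complex.exp (((ρ ^ 2)⁻¹ : ℝ) * saddleCubic x (σ ^ 2) p +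
            ((ρ ^ 2)⁻¹ : ℝ) ^ 2 * saddleQuartic (σ ^ 2) p)) := by
  have hρ' : (ρ : ℂ) ≠ 0 := Complex.ofReal_ne_zero.2 hρ
  rw [← Complex.exp_add, ← Complex.exp_add, quarticExp, saddleQuad, saddleCubic, saddleQuartic]
  congr 1
  push_cast
  field_simp
  ring

lemma integral_quarticExp_eq_saddleIntegral {ρ φ : ℝ} (hρ : 0 < ρ) (hφ : |φ| < π / 8) {σ : ℂ}
    (hσ : σ = Complex.exp (φ * Complex.I)) :
    ρ * ∫ u : ℝ, quarticExp x (-4 * (ρ * σ) ^ 3) u =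
      σ * Complex.exp (3 * (ρ * σ) ^ 4 - x * (ρ * σ) ^ 2) *
        saddleIntegral x (σ ^ 2) (ρ ^ 2)⁻¹ := by
  set f : ℝ → ℂ := fun u => quarticExp x (-4 * (ρ * σ) ^ 3) (σ * u) with hf
  have hshift : ∫ p : ℝ, f (-ρ⁻¹ * p - ρ) = ρ * ∫ u : ℝ, f u := by
    rw [Measure.integral_comp_mul_left (fun v => f (v - ρ)) (-ρ⁻¹), integral_sub_right_eq_self f ρ,
      inv_neg, inv_inv, abs_neg, abs_of_pos hρ, Complex.real_smul]
  simp only [hf, quarticExp_saddle_shift x hρ.ne', integral_const_mul] at hshift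
  rw [← integral_quarticExp_rotate x _ hφ, ← hσ, mul_left_comm, ← hshift, mul_assoc, saddleIntegral]

lemma exp_arg_mul_I_eq_div_norm (hz : z ≠ 0) : Complex.exp (z.arg * Complex.I) = z / ‖z‖ := by
  rw [eq_div_iff (Complex.ofReal_ne_zero.2 (norm_ne_zero_iff.2 hz)), mul_comm,
    Complex.norm_mul_exp_arg_mul_I]

lemma P_eq_saddleIntegral (hz : z ≠ 0) (harg : |z.arg| < π / 8) :
    2 * z * P x (4 * Complex.I * z ^ 3) = Complex.exp (3 * z ^ 4 - x * z ^ 2) *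
      ((z / ‖z‖) ^ 2 * saddleIntegral x ((z / ‖z‖) ^ 2) (‖z‖ ^ 2)⁻¹) := by
  have hnorm : (‖z‖ : ℂ) ≠ 0 := Complex.ofReal_ne_zero.2 (norm_ne_zero_iff.2 hz)
  have hsaddle := integral_quarticExp_eq_saddleIntegral x (norm_pos_iff.2 hz) harg
    (exp_arg_mul_I_eq_div_norm hz).symm
  have hw : Complex.I * (4 * Complex.I * z ^ 3) = -4 * z ^ 3 := by
    linear_combination 4 * z ^ 3 * Complex.I_mul_I
  rw [mul_div_cancel₀ z hnorm] at hsaddle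
  rw [P_eq_integral_quarticExp, hw]
  calc 2 * z * (1 / 2 * ∫ u : ℝ, quarticExp x (-4 * z ^ 3) u)
      = z / ‖z‖ * (‖z‖ * ∫ u : ℝ, quarticExp x (-4 * z ^ 3) u) := by field_simp
    _ = _ := by
      rw [hsaddle]
      ring

lemma re_div_norm_sq_pos (hz : z ≠ 0) (harg : |z.arg| < π / 4) : 0 < ((z / ‖z‖) ^ 2).re := by
  have htwo : ((2 : ℕ) : ℂ) * (z.arg * Complex.I) = ((2 * z.arg : ℝ) : ℂ) * Complex.I := by
    push_cast
    ring
  rw [← exp_arg_mul_I_eq_div_norm hz, ← Complex.exp_nat_mul, htwo, Complex.exp_ofReal_mul_I_re]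
  exact Real.cos_pos_of_mem_Ioo ⟨by linarith [(abs_lt.1 harg).1], by linarith [(abs_lt.1 harg).2]⟩

lemma cos_four_mul_le_re_div_norm_pow {b : ℝ} (hb : b ≤ π / 4) (hz : z ≠ 0) (harg : |z.arg| ≤ b) :
    Real.cos (4 * b) ≤ (((z / ‖z‖) ^ 2) ^ 2).re := by
  rw [← pow_mul, ← exp_arg_mul_I_eq_div_norm hz]
  exact cos_four_mul_le_re_exp_mul_I_pow_four hb harg

lemma P_sub_sum_eq_saddleIntegral_sub_sum (hz : z ≠ 0) (harg : |z.arg| < π / 8) (N : ℕ) :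
    2 / √(π / 6) * z * P x (4 * Complex.I * z ^ 3) *
        Complex.exp (-3 * z ^ 4 + x * z ^ 2 - x ^ 2 / 6) -
        ∑ n ∈ Finset.range N, A x n / (cbrtFour * z) ^ (2 * n) =
      Complex.exp (-x ^ 2 / 6) / √(π / 6) * (z / ‖z‖) ^ 2 *
        (saddleIntegral x ((z / ‖z‖) ^ 2) (‖z‖ ^ 2)⁻¹ - ∑ n ∈ Finset.range N,
          ((‖z‖ ^ 2)⁻¹ : ℝ) ^ n * saddleCoeff x ((z / ‖z‖) ^ 2) n) := by
  have hnorm : (‖z‖ : ℂ) ≠ 0 := Complex.ofReal_ne_zero.2 (norm_ne_zero_iff.2 hz)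
  have hsqrt : (√(π / 6) : ℂ) ≠ 0 := Complex.ofReal_ne_zero.2 (by positivity)
  have hc0 := ofReal_cbrtFour_ne_zero
  have hre := re_div_norm_sq_pos hz (by linarith [Real.pi_pos])
  have hre2 : 0 < (((z / ‖z‖) ^ 2) ^ 2).re :=
    (Real.cos_pos_of_mem_Ioo ⟨by linarith [abs_nonneg z.arg, Real.pi_pos], by linarith⟩).trans_le
      (cos_four_mul_le_re_div_norm_pow (by linarith [Real.pi_pos]) hz le_rfl)
  rw [mul_sub, Finset.mul_sum]
  congr 1
  · have hexp : Complex.exp (-3 * z ^ 4 + x * z ^ 2 - x ^ 2 / 6) *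
        Complex.exp (3 * z ^ 4 - x * z ^ 2) = Complex.exp (-x ^ 2 / 6) := by
      rw [← Complex.exp_add]
      ring_nf
    rw [← hexp]
    linear_combination Complex.exp (-3 * z ^ 4 + x * z ^ 2 - x ^ 2 / 6) / √(π / 6) *
      P_eq_saddleIntegral x hz harg
  · refine Finset.sum_congr rfl fun n _ => ?_
    rw [saddleCoeff_eq x hre hre2, neg_div, Complex.exp_neg]
    have := Complex.exp_ne_zero (x ^ 2 / 6)
    push_cast
    field_simp
    rw [pow_mul, mul_assoc, ← mul_pow]
    ring_nf

lemma isBigO_P_sub_sum_sector {b : ℝ} (hb0 : 0 ≤ b) (hb : b < π / 8) (N : ℕ) :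
    (fun z : ℂ => 2 / √(π / 6) * z * P x (4 * Complex.I * z ^ 3) *
        Complex.exp (-3 * z ^ 4 + x * z ^ 2 - x ^ 2 / 6) -
        ∑ n ∈ Finset.range N, A x n / (cbrtFour * z) ^ (2 * n))
      =O[Bornology.cobounded ℂ ⊓ 𝓟 {z | |z.arg| ≤ b}] fun z => (‖z‖ ^ (2 * N))⁻¹ := by
  have hκ : 0 < Real.cos (4 * b) :=
    Real.cos_pos_of_mem_Ioo ⟨by linarith [Real.pi_pos], by linarith⟩
  obtain ⟨C, ε₀, hε₀, hC⟩ := exists_norm_saddleIntegral_sub_le x hκ N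
  refine IsBigO.of_bound (‖Complex.exp (-x ^ 2 / 6) / √(π / 6)‖ * C)
    (eventually_inf_principal.2 ?_)
  have hlarge := (tendsto_pow_atTop two_ne_zero).comp (tendsto_norm_cobounded_atTop (E := ℂ))
  filter_upwards [hlarge.eventually_ge_atTop ε₀⁻¹, hlarge.eventually_gt_atTop 0] with z hzε hz0 harg
  have hz : z ≠ 0 := by rintro rfl; simp at hz0
  have hs : ‖(z / ‖z‖) ^ 2‖ = 1 := by simp [hz]
  have hε : (‖z‖ ^ 2)⁻¹ ≤ ε₀ := inv_le_of_inv_le₀ hε₀ hzε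
  rw [P_sub_sum_eq_saddleIntegral_sub_sum x hz (harg.trans_lt hb), norm_mul, norm_mul, hs, mul_one,
    mul_assoc, norm_inv, norm_pow, norm_norm, pow_mul, ← inv_pow (‖z‖ ^ 2)]
  exact mul_le_mul_of_nonneg_left (hC _ hs
    (cos_four_mul_le_re_div_norm_pow (by linarith [Real.pi_pos]) hz harg) _
    ⟨by positivity, hε⟩) (norm_nonneg _)

end Sector

/-! ### The change of variables `y = 4 i z³` -/

section Saddle

/-- The large parameter `z = y ^ (1 / 3) / (4 ^ (1 / 3) * exp (π * i / 6))`: the solution of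
`4 * i * z ^ 3 = y` for which `-z` is the saddle point governing `P x y`. -/
noncomputable def saddleParam (y : ℂ) : ℂ :=
  y ^ ((1 : ℂ) / 3) / (cbrtFour * Complex.exp (π * Complex.I / 6))

lemma cpow_div_three (y : ℂ) (n : ℕ) : y ^ ((n : ℂ) / 3) = (y ^ ((1 : ℂ) / 3)) ^ n := by
  rw [← Complex.cpow_nat_mul, mul_one_div]

lemma exp_mul_pi_mul_I_div_six (n : ℕ) :
    Complex.exp (n * π * Complex.I / 6) = Complex.exp (π * Complex.I / 6) ^ n := by
  rw [← Complex.exp_nat_mul]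
  ring_nf

lemma exp_pi_mul_I_div_six_pow_three : Complex.exp (π * Complex.I / 6) ^ 3 = Complex.I := by
  rw [← Complex.exp_nat_mul]
  convert Complex.exp_pi_div_two_mul_I using 2
  push_cast
  ring

lemma four_mul_I_mul_saddleParam_pow_three (y : ℂ) : 4 * Complex.I * saddleParam y ^ 3 = y := by
  have hcube : (y ^ ((1 : ℂ) / 3)) ^ 3 = y := by
    rw [← cpow_div_three, Nat.cast_ofNat, div_self three_ne_zero, Complex.cpow_one]
  rw [saddleParam, div_pow, mul_pow, hcube, ofReal_cbrtFour_pow_three,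
    exp_pi_mul_I_div_six_pow_three, mul_div_cancel₀ y (by simp)]

lemma norm_saddleParam (y : ℂ) : ‖saddleParam y‖ = ‖y‖ ^ ((1 : ℝ) / 3) / cbrtFour := by
  have hcpow : ‖y ^ ((1 : ℂ) / 3)‖ = ‖y‖ ^ ((1 : ℝ) / 3) := by
    rw [← Complex.norm_cpow_real]
    push_cast
    rfl
  have hexp : ‖Complex.exp (π * Complex.I / 6)‖ = 1 := by
    rw [mul_div_right_comm]
    exact_mod_cast Complex.norm_exp_ofReal_mul_I (π / 6)
  rw [saddleParam, norm_div, norm_mul, hcpow, hexp, mul_one, Complex.norm_of_nonneg cbrtFour_pos.le]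

lemma arg_saddleParam {y : ℂ} (hy : y ≠ 0) : (saddleParam y).arg = y.arg / 3 - π / 6 := by
  have hpolar : saddleParam y = ((‖y‖ ^ ((1 : ℝ) / 3) / cbrtFour : ℝ) : ℂ) *
      Complex.exp ((y.arg / 3 - π / 6 : ℝ) * Complex.I) := by
    have hcpow := Complex.cpow_ofReal y (1 / 3)
    rw [Complex.ofReal_cos, Complex.ofReal_sin, ← Complex.exp_mul_I] at hcpow
    push_cast at hcpow ⊢
    rw [saddleParam, hcpow, sub_mul, Complex.exp_sub]
    ring_nf
  obtain ⟨harg, harg'⟩ := Complex.arg_mem_Ioc y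
  rw [hpolar, Complex.arg_real_mul _ (div_pos (by positivity) cbrtFour_pos), Complex.exp_mul_I,
    Complex.arg_cos_add_sin_mul_I ⟨by linarith [Real.pi_pos], by linarith [Real.pi_pos]⟩]

lemma tendsto_saddleParam_sector {α β b : ℝ} (hα : π / 6 - b ≤ α / 3) (hβ : β / 3 ≤ π / 6 + b) :
    Tendsto saddleParam (Bornology.cobounded ℂ ⊓ 𝓟 {y | y.arg ∈ Set.Icc α β})
      (Bornology.cobounded ℂ ⊓ 𝓟 {z | |z.arg| ≤ b}) := by
  have hnorm : Tendsto (fun y => ‖saddleParam y‖) (Bornology.cobounded ℂ) atTop := by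
    simp only [norm_saddleParam]
    exact ((tendsto_rpow_atTop (by norm_num)).comp tendsto_norm_cobounded_atTop).atTop_div_const
      cbrtFour_pos
  refine tendsto_inf.2 ⟨(tendsto_norm_atTop_iff_cobounded.1 hnorm).mono_left inf_le_left,
    tendsto_principal.2 (eventually_inf_principal.2 ?_)⟩
  filter_upwards [Bornology.eventually_ne_cobounded 0] with y hy harg
  rw [arg_saddleParam hy, abs_le]
  constructor <;> linarith [harg.1, harg.2]

lemma two_rpow_five_div_six_div_sqrt :
    (2 : ℝ) ^ ((5 : ℝ) / 6) / √(π / 3) * cbrtFour = 2 / √(π / 6) := by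
  have hpow : (2 : ℝ) ^ ((5 : ℝ) / 6) * cbrtFour = 2 * √2 := by
    rw [← Real.rpow_one cbrtFour, ← two_rpow_two_mul_div_three, Real.sqrt_eq_rpow,
      ← Real.rpow_add two_pos, ← Real.rpow_one_add' zero_le_two (by norm_num)]
    norm_num
  rw [show π / 3 = 2 * (π / 6) by ring, Real.sqrt_mul zero_le_two, div_mul_eq_mul_div, hpow]
  field_simp

lemma cpow_one_third_eq_mul_saddleParam (y : ℂ) :
    y ^ ((1 : ℂ) / 3) = cbrtFour * Complex.exp (π * Complex.I / 6) * saddleParam y :=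
  (mul_div_cancel₀ _ (mul_ne_zero ofReal_cbrtFour_ne_zero (Complex.exp_ne_zero _))).symm

lemma four_cpow_neg_div_three (n : ℕ) : (4 : ℂ) ^ (-(n : ℂ) / 3) = ((cbrtFour : ℂ) ^ n)⁻¹ := by
  have hreal := four_rpow_div_three (-n)
  rw [Real.rpow_neg cbrtFour_pos.le, Real.rpow_natCast] at hreal
  rw [← Complex.ofReal_pow, ← Complex.ofReal_inv, ← hreal, Complex.ofReal_cpow (by norm_num)]
  push_cast
  rfl

lemma inv_norm_saddleParam_pow (y : ℂ) (n : ℕ) :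
    (‖saddleParam y‖ ^ (2 * n))⁻¹ = cbrtFour ^ (2 * n) * ‖y‖ ^ (-(2 * (n : ℝ)) / 3) := by
  have hpow : (‖y‖ ^ ((1 : ℝ) / 3)) ^ (2 * n) = ‖y‖ ^ (2 * (n : ℝ) / 3) := by
    rw [← Real.rpow_mul_natCast (norm_nonneg y)]
    push_cast
    ring_nf
  rw [norm_saddleParam, div_pow, hpow, inv_div, neg_div, Real.rpow_neg (norm_nonneg y),
    div_eq_mul_inv]

lemma pearcey_exponent_eq (x y : ℂ) :
    -3 * (4 : ℂ) ^ (-(4 : ℂ) / 3) * Complex.exp (-2 * (π : ℂ) * Complex.I / 3) *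
          y ^ ((4 : ℂ) / 3) +
        (4 : ℂ) ^ (-(2 : ℂ) / 3) * x * y ^ ((2 : ℂ) / 3) *
          Complex.exp (-(π : ℂ) * Complex.I / 3) - x ^ 2 / 6 =
      -3 * saddleParam y ^ 4 + x * saddleParam y ^ 2 - x ^ 2 / 6 := by
  have hc0 := ofReal_cbrtFour_ne_zero
  have hω := Complex.exp_ne_zero (π * Complex.I / 6)
  have hexp_two : Complex.exp (-(π : ℂ) * Complex.I / 3) =
      (Complex.exp (π * Complex.I / 6) ^ 2)⁻¹ := by
    rw [← Complex.exp_nat_mul, ← Complex.exp_neg]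
    push_cast
    ring_nf
  have hexp_four : Complex.exp (-2 * (π : ℂ) * Complex.I / 3) =
      (Complex.exp (π * Complex.I / 6) ^ 4)⁻¹ := by
    rw [← Complex.exp_nat_mul, ← Complex.exp_neg]
    push_cast
    ring_nf
  have hy2 := cpow_div_three y 2
  have hy4 := cpow_div_three y 4
  have h2 := four_cpow_neg_div_three 2
  have h4 := four_cpow_neg_div_three 4
  rw [cpow_one_third_eq_mul_saddleParam] at hy2 hy4
  push_cast at hy2 hy4 h2 h4
  rw [hexp_two, hexp_four, hy2, hy4, h2, h4]
  field_simp

lemma pearcey_term_eq (x y : ℂ) (n : ℕ) :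
    Complex.exp ((2 * (n : ℂ) + 1) * (π : ℂ) * Complex.I / 6) * A x n *
        y ^ (-(2 * (n : ℂ)) / 3) =
      Complex.exp (π * Complex.I / 6) * (A x n / (cbrtFour * saddleParam y) ^ (2 * n)) := by
  have hω := Complex.exp_ne_zero (π * Complex.I / 6)
  have hexp := exp_mul_pi_mul_I_div_six (2 * n + 1)
  have hpow := cpow_div_three y (2 * n)
  rw [cpow_one_third_eq_mul_saddleParam] at hpow
  push_cast at hexp hpow
  rw [hexp, neg_div, Complex.cpow_neg, hpow, mul_right_comm (cbrtFour : ℂ),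
    mul_pow _ (Complex.exp _), pow_succ]
  field_simp

lemma pearcey_sub_sum_eq (x y : ℂ) (N : ℕ) :
    P x y * ((2 : ℝ) ^ ((5 : ℝ) / 6) / √(π / 3) : ℝ) * y ^ ((1 : ℂ) / 3) *
          Complex.exp
            (-3 * (4 : ℂ) ^ (-(4 : ℂ) / 3) * Complex.exp (-2 * (π : ℂ) * Complex.I / 3) *
                y ^ ((4 : ℂ) / 3) +
              (4 : ℂ) ^ (-(2 : ℂ) / 3) * x * y ^ ((2 : ℂ) / 3) *
                Complex.exp (-(π : ℂ) * Complex.I / 3) - x ^ 2 / 6) -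
        ∑ n ∈ Finset.range N, Complex.exp ((2 * (n : ℂ) + 1) * (π : ℂ) * Complex.I / 6) * A x n *
          y ^ (-(2 * (n : ℂ)) / 3) =
      Complex.exp (π * Complex.I / 6) *
        (2 / √(π / 6) * saddleParam y * P x (4 * Complex.I * saddleParam y ^ 3) *
            Complex.exp (-3 * saddleParam y ^ 4 + x * saddleParam y ^ 2 - x ^ 2 / 6) -
          ∑ n ∈ Finset.range N, A x n / (cbrtFour * saddleParam y) ^ (2 * n)) := by
  have hconst : (((2 : ℝ) ^ ((5 : ℝ) / 6) / √(π / 3) : ℝ) : ℂ) * cbrtFour = 2 / √(π / 6) :=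
    mod_cast congrArg Complex.ofReal two_rpow_five_div_six_div_sqrt
  rw [mul_sub, Finset.mul_sum, pearcey_exponent_eq, four_mul_I_mul_saddleParam_pow_three, ← hconst,
    cpow_one_third_eq_mul_saddleParam, Finset.sum_congr rfl fun n _ => pearcey_term_eq x y n]
  ring

end Saddle

section Ray

lemma tendsto_mul_exp_cobounded_inf_arg {θ : ℝ} {s : Set ℝ} (hθ : θ ∈ Set.Ioc (-π) π)
    (hs : θ ∈ s) :
    Tendsto (fun r : ℝ => (r : ℂ) * Complex.exp (Complex.I * θ)) atTop
      (Bornology.cobounded ℂ ⊓ 𝓟 {y | y.arg ∈ s}) := by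
  refine tendsto_inf.2 ⟨tendsto_norm_atTop_iff_cobounded.1 ?_,
    tendsto_principal.2 ((eventually_gt_atTop 0).mono fun r hr => ?_)⟩
  · simpa using tendsto_abs_atTop_atTop
  · change Complex.arg _ ∈ s
    rwa [mul_comm Complex.I, Complex.arg_real_mul _ hr, Complex.exp_mul_I,
      Complex.arg_cos_add_sin_mul_I hθ]

lemma isBigO_ray_of_isBigO_sector {E : Type*} [Norm E] {f : ℂ → E} {g : ℝ → ℝ} {s : Set ℝ} {θ : ℝ}
    (hθ : θ ∈ Set.Ioc (-π) π) (hs : θ ∈ s)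
    (h : f =O[Bornology.cobounded ℂ ⊓ 𝓟 {y | y.arg ∈ s}] fun y => g ‖y‖) :
    (fun r : ℝ => f (r * Complex.exp (Complex.I * θ))) =O[atTop] g := by
  refine (h.comp_tendsto (tendsto_mul_exp_cobounded_inf_arg hθ hs)).congr' .rfl ?_
  filter_upwards [eventually_ge_atTop 0] with r hr
  simp [abs_of_nonneg hr]

end Ray

theorem pearcey_asymptotic_case2_general (x : ℂ) {α β : ℝ} (hα : π / 8 < α) (hβ : β < 7 * π / 8)
    (N : ℕ) :
    (fun y : ℂ =>
        P x y * ((2 : ℝ) ^ ((5 : ℝ) / 6) / √(π / 3) : ℝ) * y ^ ((1 : ℂ) / 3) *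
            Complex.exp
              (-3 * (4 : ℂ) ^ (-(4 : ℂ) / 3) * Complex.exp (-2 * (π : ℂ) * Complex.I / 3) *
                  y ^ ((4 : ℂ) / 3)
                + (4 : ℂ) ^ (-(2 : ℂ) / 3) * x * y ^ ((2 : ℂ) / 3) *
                  Complex.exp (-(π : ℂ) * Complex.I / 3)
                - x ^ 2 / 6)
          - ∑ n ∈ Finset.range (N + 1),
              Complex.exp ((2 * (n : ℂ) + 1) * (π : ℂ) * Complex.I / 6) * A x n *
                y ^ (-(2 * (n : ℂ)) / 3))
      =O[Bornology.cobounded ℂ ⊓ 𝓟 {y | y.arg ∈ Set.Icc α β}]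
        fun y => ‖y‖ ^ (-(2 * ((N : ℝ) + 1)) / 3) := by
  obtain ⟨b, hmax, hb⟩ : ∃ b, max 0 (max (π / 6 - α / 3) (β / 3 - π / 6)) < b ∧ b < π / 8 :=
    exists_between (max_lt (by positivity) (max_lt (by linarith) (by linarith)))
  obtain ⟨hb0, hαb, hβb⟩ : 0 < b ∧ π / 6 - α / 3 < b ∧ β / 3 - π / 6 < b := by
    simpa only [max_lt_iff] using hmax
  have hsector := (isBigO_P_sub_sum_sector x hb0.le hb (N + 1)).comp_tendsto
    (tendsto_saddleParam_sector (α := α) (β := β) (by linarith) (by linarith))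
  simp only [Function.comp_def, inv_norm_saddleParam_pow] at hsector
  simp only [pearcey_sub_sum_eq]
  exact_mod_cast (hsector.trans (isBigO_const_mul_self _ _ _)).const_mul_left _

/-- Complete asymptotic expansion of `P(x,y)` for large `|y|` in the sector
`π/8 < arg y ≤ π/2` (case 2): only the saddle point `t₂` contributes. -/
theorem pearcey_asymptotic_case2 (x : ℂ) (θ : ℝ)
    (hθ : θ ∈ Set.Ioc (π / 8) (π / 2)) (N : ℕ) :
    (fun r : ℝ =>
        P x ((r : ℂ) * Complex.exp (Complex.I * (θ : ℂ))) *
            ((((2 : ℝ) ^ ((5 : ℝ) / 6) / Real.sqrt (π / 3) : ℝ)) : ℂ) *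
            ((r : ℂ) * Complex.exp (Complex.I * (θ : ℂ))) ^ ((1 : ℂ) / 3) *
            Complex.exp
              (-3 * (4 : ℂ) ^ (-(4 : ℂ) / 3) * Complex.exp (-2 * (π : ℂ) * Complex.I / 3) *
                  ((r : ℂ) * Complex.exp (Complex.I * (θ : ℂ))) ^ ((4 : ℂ) / 3)
                + (4 : ℂ) ^ (-(2 : ℂ) / 3) * x *
                  ((r : ℂ) * Complex.exp (Complex.I * (θ : ℂ))) ^ ((2 : ℂ) / 3) *
                  Complex.exp (-(π : ℂ) * Complex.I / 3)
                - x ^ 2 / 6)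
          - ∑ n ∈ Finset.range (N + 1),
              Complex.exp ((2 * (n : ℂ) + 1) * (π : ℂ) * Complex.I / 6) * A x n *
                ((r : ℂ) * Complex.exp (Complex.I * (θ : ℂ))) ^ (-(2 * (n : ℂ)) / 3))
      =O[atTop] fun r : ℝ => r ^ (-(2 * ((N : ℝ) + 1)) / 3) := by
  exact isBigO_ray_of_isBigO_sector (g := fun r => r ^ (-(2 * ((N : ℝ) + 1)) / 3))
    ⟨by linarith [hθ.1, Real.pi_pos], by linarith [hθ.2, Real.pi_pos]⟩ (Set.right_mem_Icc.2 le_rfl)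
    (pearcey_asymptotic_case2_general x hθ.1 (by linarith [hθ.2, Real.pi_pos]) N)
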